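/- arXiv:math-ph/0103030 — 2 statements merged into one kernel-verified Lean document; each statement's English description precedes it below -/
import Mathlib

section
/- For every b ∈ (0,π) and every c with 0 < c < π/2 − |b − π/2|, there exist constants C > 0 and z₁ < 0 such that |ξ(b,z) + √(−z)/(4π)| ≤ C·e^{−c√(−z)} for all z ≤ z₁; in particular ξ(b,z) = −√(−z)/(4π) + O(e^{−c√(−z)}) as z → −∞. -/
open Real Filter Topology Asymptotics

/-- The digamma function `ψ = Γ'/Γ`. -/
noncomputable def digamma (x : ℝ) : ℝ := deriv Real.Gamma x / Real.Gamma x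

/-- The regularized Green's function `ξ(b,z)` of a point interaction at height
`b ∈ (0,π)` in the Dirichlet layer `ℝ²×(0,π)`, for energies `z < 1`:
`ξ(b,z) = −(1/π²) Σ_{n≥1} ln√(1 − z/n²)·sin²(n b)
          + (1/(4π²))·[γ + ψ(b/π) + (π/2)·cot b]`. -/
noncomputable def xiLayer (b z : ℝ) : ℝ :=
  -(1 / π ^ 2) *
      ∑' n : ℕ, Real.log (Real.sqrt (1 - z / ((n : ℝ) + 1) ^ 2)) * Real.sin (((n : ℝ) + 1) * b) ^ 2
    + (1 / (4 * π ^ 2)) *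
      (Real.eulerMascheroniConstant + digamma (b / π) + (π / 2) * Real.cot b)

lemma xl_fourier_coeff (k : ℝ) (hk : 0 < k) (n : ℤ) :
    fourierCoeffOn (lt_add_of_pos_right (0:ℝ) Real.pi_pos)
      (fun y : ℝ => ((Real.cosh (k * (2 * y - π)) : ℝ) : ℂ)) n
      = ((Real.sinh (k * π) * k / (π * (k ^ 2 + (n:ℝ) ^ 2)) : ℝ) : ℂ) := by
  rw [fourierCoeffOn_eq_integral]
  have hpi : (π : ℂ) ≠ 0 := by exact_mod_cast Real.pi_ne_zero
  have h1 : (2 * (k:ℂ) - 2 * Complex.I * n) ≠ 0 := by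
    intro h
    have := congrArg Complex.re h
    simp at this
    linarith
  have h2 : (-2 * (k:ℂ) - 2 * Complex.I * n) ≠ 0 := by
    intro h
    have := congrArg Complex.re h
    simp at this
    linarith
  have hint : ∀ y : ℝ, fourier (-n) (y : AddCircle (0 + π - 0)) •
      ((Real.cosh (k * (2 * y - π)) : ℝ) : ℂ) =
      Complex.exp (-(k * π)) / 2 * Complex.exp ((2 * (k:ℂ) - 2 * Complex.I * n) * y)
      + Complex.exp (k * π) / 2 * Complex.exp ((-2 * (k:ℂ) - 2 * Complex.I * n) * y) := by
    intro y
    rw [fourier_coe_apply, Complex.ofReal_cosh, Complex.cosh, smul_eq_mul]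
    have e1 : 2 * (π:ℂ) * Complex.I * ((-n : ℤ) : ℂ) * y / ((0 + π - 0 : ℝ) : ℂ)
        = - 2 * Complex.I * n * y := by
      push_cast
      field_simp
      ring
    rw [e1, ← mul_div_assoc, mul_add, ← Complex.exp_add, ← Complex.exp_add, div_mul_eq_mul_div,
      div_mul_eq_mul_div, ← Complex.exp_add, ← Complex.exp_add, ← add_div]
    push_cast
    congr 3 <;> ring
  simp_rw [hint]
  rw [intervalIntegral.integral_add, intervalIntegral.integral_const_mul,
    intervalIntegral.integral_const_mul, integral_exp_mul_complex h1, integral_exp_mul_complex h2]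
  · have p1 : Complex.exp ((2 * (k:ℂ) - 2 * Complex.I * n) * ((0 + π : ℝ) : ℂ))
        = Complex.exp (k * π) * Complex.exp (k * π) := by
      rw [← Complex.exp_add, Complex.exp_eq_exp_iff_exists_int]
      refine ⟨-n, ?_⟩
      push_cast
      ring
    have p2 : Complex.exp ((-2 * (k:ℂ) - 2 * Complex.I * n) * ((0 + π : ℝ) : ℂ))
        = Complex.exp (-(k * π)) * Complex.exp (-(k * π)) := by
      rw [← Complex.exp_add, Complex.exp_eq_exp_iff_exists_int]
      refine ⟨-n, ?_⟩
      push_cast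
      ring
    have p3 : Complex.exp (-(k * π)) * Complex.exp (k * π) = 1 := by
      rw [← Complex.exp_add]; simp
    rw [p1, p2]
    have h3 : ((k:ℂ) ^ 2 + n ^ 2) ≠ 0 := by
      have : (k ^ 2 + (n:ℝ) ^ 2) ≠ 0 := by positivity
      exact_mod_cast this
    have e3 : Complex.exp (-(k * π)) / 2 * ((Complex.exp (k * π) * Complex.exp (k * π)
          - Complex.exp ((2 * (k:ℂ) - 2 * Complex.I * n) * ((0:ℝ):ℂ))) /
            (2 * (k:ℂ) - 2 * Complex.I * n)) +
        Complex.exp (k * π) / 2 * ((Complex.exp (-(k * π)) * Complex.exp (-(k * π))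
          - Complex.exp ((-2 * (k:ℂ) - 2 * Complex.I * n) * ((0:ℝ):ℂ))) /
            (-2 * (k:ℂ) - 2 * Complex.I * n))
        = (Complex.exp (k * π) - Complex.exp (-(k * π))) / 2 *
            (1 / (2 * (k:ℂ) - 2 * Complex.I * n) - 1 / (-2 * (k:ℂ) - 2 * Complex.I * n)) := by
      simp only [Complex.ofReal_zero, mul_zero, Complex.exp_zero]
      generalize Complex.exp (k * π) = E at *
      generalize Complex.exp (-(k * π)) = F at *
      rw [← mul_div_assoc, ← mul_div_assoc,
        show F / 2 * (E * E - 1) = (E - F) / 2 by linear_combination (E / 2) * p3,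
        show E / 2 * (F * F - 1) = -((E - F) / 2) by linear_combination (F / 2) * p3]
      ring
    have e4 : (1 / (2 * (k:ℂ) - 2 * Complex.I * n) - 1 / (-2 * (k:ℂ) - 2 * Complex.I * n))
        = k / ((k:ℂ) ^ 2 + n ^ 2) := by
      rw [div_sub_div _ _ h1 h2, div_eq_div_iff (mul_ne_zero h1 h2) h3]
      linear_combination (-4 * k * (n:ℂ)^2) * Complex.I_sq
    rw [e3, e4]
    rw [Complex.real_smul]
    push_cast
    rw [Complex.sinh]
    field_simp
    ring
  · exact Continuous.intervalIntegrable (by fun_prop) _ _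
  · exact Continuous.intervalIntegrable (by fun_prop) _ _

lemma xl_summable_int (k : ℝ) (hk : 0 < k) (s : ℝ) :
    Summable (fun n : ℤ => s * k / (π * (k ^ 2 + (n:ℝ) ^ 2))) := by
  have h := (Real.summable_one_div_int_pow (p := 2)).2 (by norm_num)
  have h' := (h.mul_left (|s * k| / π))
  have h2 : Summable (fun n : ℤ => |s * k| / π * (1 / (n:ℝ) ^ 2) + if n = 0 then |s * k| / π / k ^ 2 else 0) := by
    refine h'.add ?_
    exact (hasSum_ite_eq (0:ℤ) _).summable
  refine Summable.of_norm_bounded h2 fun n => ?_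
  rw [Real.norm_eq_abs, abs_div, abs_of_pos (by positivity : 0 < π * (k ^ 2 + (n:ℝ) ^ 2)),
    ← div_div]
  by_cases hn : n = 0
  · simp [hn]
  · have : (0:ℝ) < (n:ℝ) ^ 2 := by positivity
    simp only [hn, if_false, add_zero]
    rw [div_eq_mul_one_div]
    gcongr
    nlinarith

lemma xl_fourier (k : ℝ) (hk : 0 < k) (y : ℝ) (hy0 : 0 ≤ y) (hy : y < π) :
    HasSum (fun n : ℤ => Real.sinh (k * π) * k / (π * (k ^ 2 + (n:ℝ) ^ 2)) * Real.cos (2 * n * y))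
      (Real.cosh (k * (2 * y - π))) := by
  have : Fact (0 < π) := ⟨Real.pi_pos⟩
  let f : ℝ → ℂ := fun y : ℝ => ((Real.cosh (k * (2 * y - π)) : ℝ) : ℂ)
  have hcont : Continuous (AddCircle.liftIco π 0 f) := by
    apply AddCircle.liftIco_continuous
    · simp only [f]
      congr 1
      rw [← Real.cosh_neg]
      congr 1
      ring
    · apply Continuous.continuousOn
      simp only [f]
      fun_prop
  have hc : ∀ n, fourierCoeff (AddCircle.liftIco π 0 f) n =
      ((Real.sinh (k * π) * k / (π * (k ^ 2 + (n:ℝ) ^ 2)) : ℝ) : ℂ) := by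
    intro n
    rw [fourierCoeff_liftIco_eq, xl_fourier_coeff k hk]
  have hs : Summable (fourierCoeff (⟨_, hcont⟩ : C(AddCircle π, ℂ))) := by
    simp only [ContinuousMap.coe_mk]
    rw [funext hc]
    exact_mod_cast Complex.summable_ofReal.2 (xl_summable_int k hk _)
  have key := has_pointwise_sum_fourier_series_of_summable hs (y : AddCircle π)
  simp only [ContinuousMap.coe_mk, hc] at key
  rw [AddCircle.liftIco_coe_apply (by simpa using ⟨hy0, hy⟩)] at key
  have := Complex.hasSum_re key
  simp only [f, Complex.ofReal_re] at this
  convert this using 1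
  ext n
  rw [smul_eq_mul, Complex.re_ofReal_mul, fourier_coe_apply]
  congr 1
  have hpi : (π : ℂ) ≠ 0 := by exact_mod_cast Real.pi_ne_zero
  have e1 : 2 * (π:ℂ) * Complex.I * (n : ℂ) * y / (π : ℂ) = ((2 * n * y : ℝ) : ℂ) * Complex.I := by
    push_cast
    field_simp
  rw [e1, Complex.exp_ofReal_mul_I_re]

lemma xl_series (k : ℝ) (hk : 0 < k) (b : ℝ) (hb0 : 0 < b) (hbπ : b < π) :
    HasSum (fun n : ℕ => 2 * k / (((n:ℝ) + 1) ^ 2 + k ^ 2) * Real.sin (((n:ℝ) + 1) * b) ^ 2)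
      (π * (Real.cosh (k * π) - Real.cosh (k * (2 * b - π))) / (2 * Real.sinh (k * π))) := by
  have h := (xl_fourier k hk 0 le_rfl Real.pi_pos).sub (xl_fourier k hk b hb0.le hbπ)
  have h2 := h.nat_add_neg
  rw [← hasSum_nat_add_iff' 1] at h2
  have hs : 0 < Real.sinh (k * π) := Real.sinh_pos_iff.2 (by positivity)
  have h3 := h2.mul_left (π / (2 * Real.sinh (k * π)))
  convert h3 using 1
  · rfl
  · ext n
    have e : Real.cos (2 * ((n:ℝ) + 1) * b) = 1 - 2 * Real.sin (((n:ℝ) + 1) * b) ^ 2 := by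
      rw [show 2 * ((n:ℝ) + 1) * b = 2 * (((n:ℝ) + 1) * b) by ring, Real.cos_two_mul, Real.cos_sq']
      ring
    push_cast
    simp only [mul_zero, Real.cos_zero, neg_sq, mul_neg, neg_mul, Real.cos_neg, e]
    have : (k ^ 2 + ((n:ℝ) + 1) ^ 2) ≠ 0 := by positivity
    have : (((n:ℝ) + 1) ^ 2 + k ^ 2) ≠ 0 := by positivity
    field_simp
    ring
  · simp
    field_simp

lemma xl_digamma_add_one (x : ℝ) (hx : 0 < x) : digamma (x + 1) = digamma x + 1 / x := by
  have hd : ∀ y : ℝ, 0 < y → DifferentiableAt ℝ Real.Gamma y := fun y hy =>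
    Real.differentiableAt_Gamma (fun m => by
      have : (0:ℝ) ≤ m := Nat.cast_nonneg m
      linarith)
  have h1 : HasDerivAt (fun y => Real.Gamma (y + 1)) (deriv Real.Gamma (x + 1)) x :=
    HasDerivAt.comp_add_const x 1 (hd (x + 1) (by linarith)).hasDerivAt
  have h2 : HasDerivAt (fun y => y * Real.Gamma y) (1 * Real.Gamma x + x * deriv Real.Gamma x) x :=
    (hasDerivAt_id x).mul (hd x hx).hasDerivAt
  have h3 : (fun y => Real.Gamma (y + 1)) =ᶠ[𝓝 x] (fun y => y * Real.Gamma y) := by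
    filter_upwards [eventually_gt_nhds hx] with y hy
    exact Real.Gamma_add_one hy.ne'
  have h4 := (h2.congr_of_eventuallyEq h3).unique h1
  have hG := Real.Gamma_pos_of_pos hx
  unfold digamma
  rw [← h4, Real.Gamma_add_one hx.ne']
  field_simp
  ring

lemma xl_digamma_reflection (x : ℝ) (hx : 0 < x) (hx1 : x < 1) :
    digamma (1 - x) = digamma x + π * Real.cot (π * x) := by
  have hd : ∀ y : ℝ, 0 < y → DifferentiableAt ℝ Real.Gamma y := fun y hy =>
    Real.differentiableAt_Gamma (fun m => by
      have : (0:ℝ) ≤ m := Nat.cast_nonneg m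
      linarith)
  have h1 : HasDerivAt (fun y => Real.Gamma (1 - y)) (-deriv Real.Gamma (1 - x)) x :=
    HasDerivAt.comp_const_sub 1 x (hd (1 - x) (by linarith)).hasDerivAt
  have h2 := (hd x hx).hasDerivAt.mul h1
  have hs : 0 < Real.sin (π * x) := by
    apply Real.sin_pos_of_pos_of_lt_pi
    · positivity
    · nlinarith [Real.pi_pos]
  have h3 : HasDerivAt (fun y => Real.sin (π * y)) (Real.cos (π * x) * (π * 1)) x :=
    ((hasDerivAt_id x).const_mul π).sin
  have h5 := h2.mul h3
  have h6 : (Real.Gamma * (fun y => Real.Gamma (1 - y)) * (fun y => Real.sin (π * y))) =ᶠ[𝓝 x] fun _ => π := by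
    filter_upwards [eventually_gt_nhds hx, eventually_lt_nhds hx1] with y hy hy1
    have hs : 0 < Real.sin (π * y) := by
      apply Real.sin_pos_of_pos_of_lt_pi
      · positivity
      · nlinarith [Real.pi_pos]
    simp only [Pi.mul_apply]
    rw [Real.Gamma_mul_Gamma_one_sub]
    field_simp
  have h7 := ((hasDerivAt_const x π).congr_of_eventuallyEq h6).unique h5
  have hG := Real.Gamma_pos_of_pos hx
  have hG1 := Real.Gamma_pos_of_pos (show 0 < 1 - x by linarith)
  unfold digamma
  rw [Real.cot_eq_cos_div_sin]
  simp only [Pi.mul_apply] at h7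
  generalize Real.Gamma (1 - x) = A at *
  generalize Real.Gamma x = B at *
  generalize deriv Real.Gamma (1 - x) = A' at *
  generalize deriv Real.Gamma x = B' at *
  generalize Real.sin (π * x) = s at *
  generalize Real.cos (π * x) = t at *
  field_simp
  linarith

lemma xl_digamma_mono (x y : ℝ) (hx : 0 < x) (hxy : x ≤ y) : digamma x ≤ digamma y := by
  have hd : ∀ y : ℝ, 0 < y → HasDerivAt (Real.log ∘ Real.Gamma) (digamma y) y := fun y hy =>
    (Real.differentiableAt_Gamma (fun m => by
      have : (0:ℝ) ≤ m := Nat.cast_nonneg m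
      linarith)).hasDerivAt.log (Real.Gamma_pos_of_pos hy).ne'
  have hm := Real.convexOn_log_Gamma.monotoneOn_deriv (fun z hz => (hd z hz).differentiableAt)
  have hy : 0 < y := by linarith
  have := hm (show x ∈ Set.Ioi 0 from hx) (show y ∈ Set.Ioi 0 from hy) hxy
  rwa [(hd x hx).deriv, (hd y hy).deriv] at this

lemma xl_digamma_add_nat (x : ℝ) (hx : 0 < x) (n : ℕ) :
    digamma (n + x) = digamma x + ∑ j ∈ Finset.range n, 1 / ((j:ℝ) + x) := by
  induction n with
  | zero => simp
  | succ m ih =>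
    rw [Finset.sum_range_succ, ← add_assoc, ← ih, ← xl_digamma_add_one _ (by positivity)]
    congr 1
    push_cast
    ring

lemma xl_digamma_one : digamma 1 = -Real.eulerMascheroniConstant := by
  unfold digamma
  rw [Real.hasDerivAt_Gamma_one.deriv, Real.Gamma_one, div_one]

lemma xl_term_bound (x : ℝ) (hx : 0 < x) (hx1 : x < 1) (n : ℕ) :
    (1 - x) / (((n:ℝ) + x) * ((n:ℝ) + 1)) ≤ 1 / x * (1 / ((n:ℝ) + 1) ^ 2) := by
  have hn : (0:ℝ) ≤ n := Nat.cast_nonneg n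
  rw [div_mul_div_comm, div_le_div_iff₀ (by positivity) (by positivity)]
  have : x * ((n:ℝ) + 1) ≤ n + x := by nlinarith
  have h2 : (1 - x) * (x * ((n:ℝ) + 1)) ≤ 1 * (n + x) := by
    apply mul_le_mul <;> first | linarith | positivity
  calc (1 - x) * (x * ((n:ℝ) + 1) ^ 2) = ((1 - x) * (x * ((n:ℝ) + 1))) * (n + 1) := by ring
    _ ≤ (1 * (n + x)) * (n + 1) := by gcongr
    _ = _ := by ring

lemma xl_summable_sq : Summable (fun n : ℕ => 1 / ((n:ℝ) + 1) ^ 2) := by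
  have := (summable_nat_add_iff 1).2 ((Real.summable_one_div_nat_pow (p := 2)).2 (by norm_num))
  simpa using this

lemma xl_digamma_series (x : ℝ) (hx : 0 < x) (hx1 : x < 1) :
    HasSum (fun n : ℕ => 1 / ((n:ℝ) + 1) - 1 / ((n:ℝ) + x))
      (Real.eulerMascheroniConstant + digamma x) := by
  have hsum : Summable (fun n : ℕ => 1 / ((n:ℝ) + 1) - 1 / ((n:ℝ) + x)) := by
    refine Summable.of_norm_bounded (xl_summable_sq.mul_left (1 / x)) fun n => ?_
    have hn : (0:ℝ) ≤ n := Nat.cast_nonneg n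
    refine le_trans (le_of_eq ?_) (xl_term_bound x hx hx1 n)
    rw [Real.norm_eq_abs, abs_sub_comm, div_sub_div _ _ (by positivity) (by positivity), abs_of_nonneg]
    · congr 1; ring
    · apply div_nonneg
      · linarith
      · positivity
  rw [hsum.hasSum_iff_tendsto_nat]
  have e : ∀ n : ℕ, ∑ i ∈ Finset.range n, (1 / ((i:ℝ) + 1) - 1 / ((i:ℝ) + x)) =
      Real.eulerMascheroniConstant + digamma x + (digamma (n + 1) - digamma (n + x)) := by
    intro n
    rw [Finset.sum_sub_distrib, xl_digamma_add_nat x hx, xl_digamma_add_nat 1 one_pos,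
      xl_digamma_one]
    ring
  simp_rw [e]
  have hz : Tendsto (fun n : ℕ => digamma (n + 1) - digamma (n + x)) atTop (𝓝 0) := by
    refine squeeze_zero' (g := fun n : ℕ => 1 / (n:ℝ)) ?_ ?_ tendsto_one_div_atTop_nhds_zero_nat
    · filter_upwards with n
      have := xl_digamma_mono (n + x) (n + 1) (by positivity) (by linarith)
      linarith
    · filter_upwards [eventually_gt_atTop 0] with n hn
      have hn' : (0:ℝ) < n := by exact_mod_cast hn
      have := xl_digamma_mono n (n + x) hn' (by linarith)
      have h2 := xl_digamma_add_one n hn'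
      linarith
  simpa using hz.const_add (Real.eulerMascheroniConstant + digamma x)

lemma xl_A_deriv (b k : ℝ) :
    HasDerivAt (fun k : ℝ => ∑' n : ℕ, Real.log (1 + k ^ 2 / ((n:ℝ) + 1) ^ 2) *
        Real.sin (((n:ℝ) + 1) * b) ^ 2)
      (∑' n : ℕ, 2 * k / (((n:ℝ) + 1) ^ 2 + k ^ 2) * Real.sin (((n:ℝ) + 1) * b) ^ 2) k := by
  set R : ℝ := |k| + 1 with hR
  have hRpos : 0 < R := by positivity
  refine hasDerivAt_tsum_of_isPreconnected
    (g := fun (n : ℕ) (k : ℝ) => Real.log (1 + k ^ 2 / ((n:ℝ) + 1) ^ 2) *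
        Real.sin (((n:ℝ) + 1) * b) ^ 2)
    (g' := fun (n : ℕ) (k : ℝ) => 2 * k / (((n:ℝ) + 1) ^ 2 + k ^ 2) *
        Real.sin (((n:ℝ) + 1) * b) ^ 2)
    (u := fun n : ℕ => 2 * R * (1 / ((n:ℝ) + 1) ^ 2))
    (t := Set.Ioo (-R) R) (y₀ := 0) (xl_summable_sq.mul_left _) isOpen_Ioo isPreconnected_Ioo
    ?_ ?_ ?_ ?_ ?_
  · intro n y _
    have hpos : 0 < 1 + y ^ 2 / ((n:ℝ) + 1) ^ 2 := by positivity
    have h1 : HasDerivAt (fun y : ℝ => 1 + y ^ 2 / ((n:ℝ) + 1) ^ 2) (2 * y / ((n:ℝ) + 1) ^ 2) y := by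
      have := ((hasDerivAt_pow 2 y).div_const (((n:ℝ) + 1) ^ 2)).const_add 1
      simpa using this
    convert (h1.log hpos.ne').mul_const (Real.sin (((n:ℝ) + 1) * b) ^ 2) using 1
    congr 1
    have : (((n:ℝ) + 1) ^ 2 + y ^ 2) ≠ 0 := by positivity
    field_simp
  · intro n y hy
    have hy' : |y| ≤ R := (abs_lt.2 hy).le
    rw [Real.norm_eq_abs, abs_mul, abs_div, abs_mul, abs_of_pos (two_pos),
      abs_of_pos (by positivity : 0 < ((n:ℝ) + 1) ^ 2 + y ^ 2), abs_of_nonneg (sq_nonneg (Real.sin _))]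
    calc 2 * |y| / (((n:ℝ) + 1) ^ 2 + y ^ 2) * Real.sin (((n:ℝ) + 1) * b) ^ 2
        ≤ 2 * R / (((n:ℝ) + 1) ^ 2) * 1 := by
          gcongr
          · nlinarith [sq_nonneg y]
          · exact Real.sin_sq_le_one _
      _ = _ := by ring
  · constructor <;> linarith
  · simp
  · exact abs_lt.1 (by rw [hR]; linarith)

noncomputable def xlH (y k : ℝ) : ℝ := (1 - Real.exp (-(2 * π * y) * k)) / y

noncomputable def xlTerm (x : ℝ) (n : ℕ) (k : ℝ) : ℝ :=
  ((xlH (n + 1) k - xlH (n + x) k) + (xlH (n + 1) k - xlH (n + (1 - x)) k)) / 2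

lemma xlH_deriv (y k : ℝ) (hy : 0 < y) :
    HasDerivAt (xlH y) (2 * π * Real.exp (-(2 * π * y) * k)) k := by
  unfold xlH
  have h := ((((hasDerivAt_id k).const_mul (-(2 * π * y))).exp).const_sub 1).div_const y
  convert! h using 1
  field_simp
  rfl

lemma xlH_bound (y δ k : ℝ) (hy : 0 < y) (hδ : 0 ≤ δ) (hk : 0 ≤ k) :
    |xlH (y + δ) k - xlH y k| ≤ δ / (y * (y + δ)) := by
  unfold xlH
  set K := 2 * π * k with hK
  have hK0 : 0 ≤ K := by positivity
  rw [show -(2 * π * (y + δ)) * k = -(K * y) + -(K * δ) by rw [hK]; ring,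
    show -(2 * π * y) * k = -(K * y) by rw [hK]; ring, Real.exp_add]
  have hp1 : Real.exp (-(K * y)) ≤ 1 := Real.exp_le_one_iff.2 (by
    have : 0 ≤ K * y := by positivity
    linarith)
  have hp0 := Real.exp_pos (-(K * y))
  have hq1 : Real.exp (-(K * δ)) ≤ 1 := Real.exp_le_one_iff.2 (by
    have : 0 ≤ K * δ := by positivity
    linarith)
  have hq2 : 1 - K * δ ≤ Real.exp (-(K * δ)) := by
    have := Real.add_one_le_exp (-(K * δ)); linarith
  have hr : K * y * Real.exp (-(K * y)) ≤ 1 := by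
    have h1 := Real.add_one_le_exp (K * y)
    have h2 : Real.exp (K * y) * Real.exp (-(K * y)) = 1 := by rw [← Real.exp_add]; simp
    nlinarith
  generalize Real.exp (-(K * y)) = p at *
  generalize Real.exp (-(K * δ)) = q at *
  have hyd : 0 < y + δ := by linarith
  have e : (1 - p * q) / (y + δ) - (1 - p) / y = (y * p * (1 - q) - δ * (1 - p)) / (y * (y + δ)) := by
    field_simp
    ring
  rw [e, abs_div, abs_of_pos (by positivity : 0 < y * (y + δ))]
  gcongr
  have hA0 : 0 ≤ y * p * (1 - q) := mul_nonneg (by positivity) (by linarith)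
  have hA : y * p * (1 - q) ≤ δ := by
    calc y * p * (1 - q) ≤ y * p * (K * δ) := by gcongr; linarith
      _ = (K * y * p) * δ := by ring
      _ ≤ 1 * δ := by gcongr
      _ = δ := one_mul _
  have hB0 : 0 ≤ δ * (1 - p) := mul_nonneg hδ (by linarith)
  have hB : δ * (1 - p) ≤ δ := by nlinarith
  rw [abs_le]
  constructor <;> linarith

lemma xlTerm_bound (x : ℝ) (hx : 0 < x) (hx1 : x < 1) (n : ℕ) (k : ℝ) (hk : 0 ≤ k) :
    |xlTerm x n k| ≤ (1 / x + 1 / (1 - x)) / 2 * (1 / ((n:ℝ) + 1) ^ 2) := by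
  have hn : (0:ℝ) ≤ n := Nat.cast_nonneg n
  have h1 := xlH_bound (n + x) (1 - x) k (by positivity) (by linarith) hk
  have h2 := xlH_bound (n + (1 - x)) x k (by linarith) (by linarith) hk
  have t1 := xl_term_bound x hx hx1 n
  have t2 := xl_term_bound (1 - x) (by linarith) (by linarith) n
  rw [show (n:ℝ) + x + (1 - x) = n + 1 by ring] at h1
  rw [show (n:ℝ) + (1 - x) + x = n + 1 by ring] at h2
  rw [show 1 - (1 - x) = x by ring] at t2
  unfold xlTerm
  rw [abs_div, abs_of_pos (two_pos : (0:ℝ) < 2)]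
  have := abs_add_le (xlH (n + 1) k - xlH (n + x) k) (xlH (n + 1) k - xlH (n + (1 - x)) k)
  linarith

lemma xl_exp_nat (q : ℝ) (n : ℕ) (y k : ℝ) (hq : q = Real.exp (-(2 * π) * k)) :
    Real.exp (-(2 * π * (n + y)) * k) = q ^ n * Real.exp (-(2 * π * y) * k) := by
  rw [hq, ← Real.exp_nat_mul, ← Real.exp_add]
  congr 1
  ring

lemma xl_H_cont (x : ℝ) (hx : 0 < x) (hx1 : x < 1) :
    ContinuousOn (fun k => ∑' n, xlTerm x n k) (Set.Ici 0) := by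
  refine continuousOn_tsum (fun n => ?_)
    (xl_summable_sq.mul_left ((1 / x + 1 / (1 - x)) / 2)) (fun n k hk => ?_)
  · unfold xlTerm xlH
    fun_prop
  · rw [Real.norm_eq_abs]; exact xlTerm_bound x hx hx1 n k hk

lemma xl_H_deriv (x : ℝ) (hx : 0 < x) (hx1 : x < 1) (k : ℝ) (hk : 0 < k) :
    HasDerivAt (fun k => ∑' n, xlTerm x n k)
      (π * (Real.cosh (k * π) - Real.cosh (k * (2 * (π * x) - π))) / Real.sinh (k * π) - π) k := by
  have hd : ∀ (n : ℕ) (y : ℝ), HasDerivAt (xlTerm x n)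
      (((2 * π * Real.exp (-(2 * π * (n + 1)) * y) - 2 * π * Real.exp (-(2 * π * (n + x)) * y)) +
        (2 * π * Real.exp (-(2 * π * (n + 1)) * y) - 2 * π * Real.exp (-(2 * π * (n + (1 - x))) * y))) / 2) y := by
    intro n y
    have hn : (0:ℝ) ≤ n := Nat.cast_nonneg n
    have a := xlH_deriv (n + 1) y (by positivity)
    have b := xlH_deriv (n + x) y (by positivity)
    have c := xlH_deriv (n + (1 - x)) y (by linarith)
    exact ((a.sub b).add (a.sub c)).div_const 2
  have hq : ∀ y : ℝ, 0 < y → Real.exp (-(2 * π) * y) < 1 := fun y hy =>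
    Real.exp_lt_one_iff.2 (by have := Real.pi_pos; nlinarith)
  have key := hasDerivAt_tsum_of_isPreconnected (g := fun n => xlTerm x n) (y := k)
    (u := fun n : ℕ => 4 * π * (Real.exp (-(2 * π) * (k / 2))) ^ n)
    (t := Set.Ioi (k / 2)) (y₀ := k)
    ((summable_geometric_of_lt_one (Real.exp_pos _).le (hq _ (by linarith))).mul_left _)
    isOpen_Ioi isPreconnected_Ioi (fun n y _ => hd n y) ?_ (by simp [hk])
    ?_ (by simp [hk])
  · convert! key using 1
    set q := Real.exp (-(2 * π) * k) with hqd
    have hg := hasSum_geometric_of_lt_one (Real.exp_pos _).le (hq k hk)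
    rw [← hqd] at hg
    have hg2 := hg.mul_right (π * (2 * Real.exp (-(2 * π * 1) * k) - Real.exp (-(2 * π * x) * k)
      - Real.exp (-(2 * π * (1 - x)) * k)))
    have hg3 := hg2.tsum_eq
    rw [show (∑' n : ℕ, ((2 * π * Real.exp (-(2 * π * (n + 1)) * k) - 2 * π * Real.exp (-(2 * π * (n + x)) * k)) +
        (2 * π * Real.exp (-(2 * π * (n + 1)) * k) - 2 * π * Real.exp (-(2 * π * (n + (1 - x))) * k))) / 2)
        = (1 - q)⁻¹ * (π * (2 * Real.exp (-(2 * π * 1) * k) - Real.exp (-(2 * π * x) * k)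
      - Real.exp (-(2 * π * (1 - x)) * k))) from ?_]
    · have hE : 0 < Real.exp (k * π) := Real.exp_pos _
      have hs : 0 < Real.sinh (k * π) := Real.sinh_pos_iff.2 (by positivity)
      have h1q : 0 < 1 - q := by linarith [hq k hk]
      have eq1 : q = Real.exp (-(k * π)) * Real.exp (-(k * π)) := by
        rw [hqd, ← Real.exp_add]; congr 1; ring
      have ee : Real.exp (k * π) * Real.exp (-(k * π)) = 1 := by rw [← Real.exp_add]; simp
      have e1 : Real.exp (-(2 * π * 1) * k) = q := by rw [hqd]; congr 1; ring
      have e2 : Real.exp (-(2 * π * x) * k) =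
          Real.exp (-(k * π)) * Real.exp (-(k * (2 * (π * x) - π))) := by
        rw [← Real.exp_add]; congr 1; ring
      have e3 : Real.exp (-(2 * π * (1 - x)) * k) =
          Real.exp (-(k * π)) * Real.exp (k * (2 * (π * x) - π)) := by
        rw [← Real.exp_add]; congr 1; ring
      have hne : 1 - q = Real.exp (-(k * π)) * (2 * Real.sinh (k * π)) := by
        rw [Real.sinh_eq, eq1]; linear_combination -ee
      rw [e1, e2, e3, inv_mul_eq_div, hne, div_sub' hs.ne', div_eq_div_iff hs.ne' (by positivity)]
      rw [Real.cosh_eq, Real.cosh_eq, eq1, Real.sinh_eq]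
      ring
    · rw [← hg3]
      refine tsum_congr fun n => ?_
      rw [xl_exp_nat q n 1 k hqd, xl_exp_nat q n x k hqd, xl_exp_nat q n (1 - x) k hqd]
      ring
  · intro n y hy
    have hy0 : k / 2 < y := hy
    have hb : ∀ w : ℝ, 0 ≤ w → 0 ≤ Real.exp (-(2 * π * (n + w)) * y) ∧
        Real.exp (-(2 * π * (n + w)) * y) ≤ (Real.exp (-(2 * π) * (k / 2))) ^ n := by
      intro w hw
      refine ⟨(Real.exp_pos _).le, ?_⟩
      rw [← Real.exp_nat_mul]
      apply Real.exp_le_exp.2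
      have hn : (0:ℝ) ≤ n := Nat.cast_nonneg n
      have h1 : (n:ℝ) * (k / 2) ≤ (n + w) * y := by
        apply mul_le_mul <;> linarith
      have := mul_le_mul_of_nonneg_left h1 (show 0 ≤ 2 * π by positivity)
      linarith
    obtain ⟨a1, a2⟩ := hb 1 (by norm_num)
    obtain ⟨b1, b2⟩ := hb x hx.le
    obtain ⟨c1, c2⟩ := hb (1 - x) (by linarith)
    have hpi := Real.pi_pos
    rw [Real.norm_eq_abs, abs_le]
    constructor <;> nlinarith
  · exact Summable.of_norm_bounded (xl_summable_sq.mul_left ((1 / x + 1 / (1 - x)) / 2))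
      (fun n => xlTerm_bound x hx hx1 n k hk.le)

lemma xl_identity (x : ℝ) (hx : 0 < x) (hx1 : x < 1) (k : ℝ) (hk : 0 ≤ k) :
    2 * ∑' n : ℕ, Real.log (1 + k ^ 2 / ((n:ℝ) + 1) ^ 2) * Real.sin (((n:ℝ) + 1) * (π * x)) ^ 2
      = π * k + ∑' n, xlTerm x n k := by
  have hpi := Real.pi_pos
  set F : ℝ → ℝ := fun k => 2 * (∑' n : ℕ, Real.log (1 + k ^ 2 / ((n:ℝ) + 1) ^ 2) *
    Real.sin (((n:ℝ) + 1) * (π * x)) ^ 2) - π * k - ∑' n, xlTerm x n k with hF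
  have hcA : Continuous (fun k : ℝ => ∑' n : ℕ, Real.log (1 + k ^ 2 / ((n:ℝ) + 1) ^ 2) *
    Real.sin (((n:ℝ) + 1) * (π * x)) ^ 2) :=
    continuous_iff_continuousAt.2 fun k => (xl_A_deriv (π * x) k).continuousAt
  have hc : ContinuousOn F (Set.Icc 0 k) := by
    refine ((hcA.const_mul 2).sub (by fun_prop)).continuousOn.sub ?_
    exact (xl_H_cont x hx hx1).mono (fun y hy => hy.1)
  have hder : ∀ y ∈ Set.Ioo 0 k, HasDerivAt F 0 y := by
    intro y hy
    have h1 := ((xl_A_deriv (π * x) y).const_mul 2)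
    rw [(xl_series y hy.1 (π * x) (by positivity) (by nlinarith)).tsum_eq] at h1
    have h2 := (h1.sub ((hasDerivAt_id y).const_mul π)).sub (xl_H_deriv x hx hx1 y hy.1)
    convert! h2 using 1
    have hs : 0 < Real.sinh (y * π) := Real.sinh_pos_iff.2 (mul_pos hy.1 hpi)
    field_simp
    ring
  have h0 : F 0 = 0 := by
    simp [hF, xlTerm, xlH]
  have : F k = F 0 := by
    rcases hk.eq_or_lt with h | h
    · rw [← h]
    · obtain ⟨c, hc1, hc2⟩ := exists_hasDerivAt_eq_slope F (fun _ => 0) h hc hder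
      have : k - 0 ≠ 0 := by linarith
      rw [eq_comm, div_eq_zero_iff] at hc2
      rcases hc2 with h | h
      · linarith
      · exact absurd h this
  rw [h0, hF] at this
  simp only at this
  linarith

lemma xl_const_series (b : ℝ) (hb0 : 0 < b) (hbπ : b < π) :
    HasSum (fun n : ℕ => ((1 / ((n:ℝ) + 1) - 1 / ((n:ℝ) + b / π)) +
        (1 / ((n:ℝ) + 1) - 1 / ((n:ℝ) + (1 - b / π)))) / 2)
      (Real.eulerMascheroniConstant + digamma (b / π) + (π / 2) * Real.cot b) := by
  have hpi := Real.pi_pos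
  have hx : 0 < b / π := by positivity
  have hx1 : b / π < 1 := (div_lt_one hpi).2 hbπ
  have h := ((xl_digamma_series _ hx hx1).add
    (xl_digamma_series (1 - b / π) (by linarith) (by linarith))).div_const 2
  have e : Real.eulerMascheroniConstant + digamma (b / π) + (π / 2) * Real.cot b =
      (Real.eulerMascheroniConstant + digamma (b / π) +
        (Real.eulerMascheroniConstant + digamma (1 - b / π))) / 2 := by
    rw [xl_digamma_reflection _ hx hx1, mul_div_cancel₀ b hpi.ne']
    ring
  rw [e]
  exact h

lemma xl_err_one (n : ℕ) (w k c : ℝ) (hw : 0 < w) (hk : 1 ≤ k) (hc : c ≤ 2 * π * w) :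
    |Real.exp (-(2 * π * (n + w)) * k) / (n + w)| ≤
      Real.exp (-(2 * π)) ^ n * Real.exp (-c * k) * (1 / w) := by
  have hpi := Real.pi_pos
  have hn : (0:ℝ) ≤ n := Nat.cast_nonneg n
  rw [abs_of_pos (by positivity), div_eq_mul_one_div, ← Real.exp_nat_mul, ← Real.exp_add]
  gcongr
  · have h1 : c * k ≤ 2 * π * w * k := by gcongr
    have h2 : 2 * π * n * 1 ≤ 2 * π * n * k := by gcongr
    linarith
  · linarith

lemma xl_err (x k c : ℝ) (hx : 0 < x) (hx1 : x < 1) (hk : 1 ≤ k) (hc1 : c ≤ 2 * π * x)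
    (hc2 : c ≤ 2 * π * (1 - x)) (n : ℕ) :
    |xlTerm x n k - ((1 / ((n:ℝ) + 1) - 1 / ((n:ℝ) + x)) +
        (1 / ((n:ℝ) + 1) - 1 / ((n:ℝ) + (1 - x)))) / 2| ≤
      (1 + 1 / x + 1 / (1 - x)) * Real.exp (-c * k) * Real.exp (-(2 * π)) ^ n := by
  have hpi := Real.pi_pos
  have a := xl_err_one n 1 k c one_pos hk (by nlinarith)
  have b := xl_err_one n x k c hx hk hc1
  have d := xl_err_one n (1 - x) k c (by linarith) hk hc2
  have e : xlTerm x n k - ((1 / ((n:ℝ) + 1) - 1 / ((n:ℝ) + x)) +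
        (1 / ((n:ℝ) + 1) - 1 / ((n:ℝ) + (1 - x)))) / 2 =
      -(Real.exp (-(2 * π * (n + 1)) * k) / (n + 1)) +
      (Real.exp (-(2 * π * (n + x)) * k) / (n + x)) / 2 +
      (Real.exp (-(2 * π * (n + (1 - x))) * k) / (n + (1 - x))) / 2 := by
    unfold xlTerm xlH
    simp only [sub_div]
    ring
  rw [e]
  have hb0 := abs_nonneg (Real.exp (-(2 * π * (n + x)) * k) / (n + x))
  have hd0 := abs_nonneg (Real.exp (-(2 * π * (n + (1 - x))) * k) / (n + (1 - x)))
  rw [abs_le] at a b d ⊢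
  constructor <;> linarith [a.1, a.2, b.1, b.2, d.1, d.2]

theorem xiLayer_strong_coupling_asymptotics (b c : ℝ) (hb0 : 0 < b) (hbπ : b < π)
    (hc0 : 0 < c) (hc : c < π / 2 - |b - π / 2|) :
    ∃ C : ℝ, 0 < C ∧ ∃ z₁ : ℝ, z₁ < 0 ∧ ∀ z : ℝ, z ≤ z₁ →
      |xiLayer b z + Real.sqrt (-z) / (4 * π)| ≤ C * Real.exp (-c * Real.sqrt (-z)) := by
  have hpi := Real.pi_pos
  set x := b / π with hxd
  have hx : 0 < x := by positivity
  have hx1 : x < 1 := (div_lt_one hpi).2 hbπ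
  have hpx : π * x = b := mul_div_cancel₀ b hpi.ne'
  have hx1' : 0 < 1 - x := by linarith
  have hr : Real.exp (-(2 * π)) < 1 := Real.exp_lt_one_iff.2 (by linarith)
  have hr' : 0 < 1 - Real.exp (-(2 * π)) := by linarith
  have hcb1 : c ≤ 2 * π * x := by
    have := neg_abs_le (b - π / 2)
    nlinarith
  have hcb2 : c ≤ 2 * π * (1 - x) := by
    have := le_abs_self (b - π / 2)
    nlinarith
  refine ⟨1 / (4 * π ^ 2) * ((1 + 1 / x + 1 / (1 - x)) * (1 - Real.exp (-(2 * π)))⁻¹),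
    by positivity, -1, by norm_num, fun z hz => ?_⟩
  set k := Real.sqrt (-z) with hkd
  have hk1 : 1 ≤ k := Real.one_le_sqrt.2 (by linarith)
  have hk2 : k ^ 2 = -z := Real.sq_sqrt (by linarith)
  have hid := xl_identity x hx hx1 k (by linarith)
  rw [hpx] at hid
  have hS : ∑' n : ℕ, Real.log (Real.sqrt (1 - z / ((n : ℝ) + 1) ^ 2)) *
      Real.sin (((n : ℝ) + 1) * b) ^ 2 =
      (1 / 2) * ∑' n : ℕ, Real.log (1 + k ^ 2 / ((n:ℝ) + 1) ^ 2) *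
        Real.sin (((n:ℝ) + 1) * b) ^ 2 := by
    rw [← tsum_mul_left]
    refine tsum_congr fun n => ?_
    rw [show 1 - z / ((n : ℝ) + 1) ^ 2 = 1 + k ^ 2 / ((n:ℝ) + 1) ^ 2 by rw [hk2]; ring,
      Real.log_sqrt (by positivity)]
    ring
  have hT : Summable (fun n => xlTerm x n k) :=
    Summable.of_norm_bounded (xl_summable_sq.mul_left ((1 / x + 1 / (1 - x)) / 2))
      (fun n => xlTerm_bound x hx hx1 n k (by linarith))
  have hdiff := hT.hasSum.sub (xl_const_series b hb0 hbπ)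
  have hbound := tsum_of_norm_bounded
    (f := fun n : ℕ => xlTerm x n k - ((1 / ((n:ℝ) + 1) - 1 / ((n:ℝ) + x)) +
        (1 / ((n:ℝ) + 1) - 1 / ((n:ℝ) + (1 - x)))) / 2)
    ((hasSum_geometric_of_lt_one (Real.exp_pos _).le hr).mul_left
      ((1 + 1 / x + 1 / (1 - x)) * Real.exp (-c * k)))
    (fun n => xl_err x k c hx hx1 hk1 hcb1 hcb2 n)
  rw [hdiff.tsum_eq, Real.norm_eq_abs] at hbound
  have hxi : xiLayer b z + k / (4 * π) = -(1 / (4 * π ^ 2)) * ((∑' n, xlTerm x n k) -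
      (Real.eulerMascheroniConstant + digamma (b / π) + (π / 2) * Real.cot b)) := by
    unfold xiLayer
    rw [hS]
    generalize (∑' n : ℕ, Real.log (1 + k ^ 2 / ((n:ℝ) + 1) ^ 2) *
        Real.sin (((n:ℝ) + 1) * b) ^ 2) = S at *
    generalize (∑' n, xlTerm x n k) = T at *
    have : T = 2 * S - π * k := by linarith
    rw [this]
    field_simp
    ring
  rw [hxi, abs_mul, abs_neg, abs_of_pos (by positivity : 0 < 1 / (4 * π ^ 2))]
  calc _ ≤ 1 / (4 * π ^ 2) * ((1 + 1 / x + 1 / (1 - x)) * Real.exp (-c * k) *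
        (1 - Real.exp (-(2 * π)))⁻¹) := by gcongr
    _ = _ := by ring
end

section
/- For every B ≠ 0, d > 0 and b ∈ (0,d), the function z ↦ ξ_B(b,z) is differentiable on each connected component of ℝ ∖ Σ_B with derivative dξ_B/dz = (1/(4πd|B|)) Σ_{n=1}^∞ ψ'((|B| − z + (πn/d)²)/(2|B|))·sin²(πnb/d), where ψ' is the trigamma function; this derivative is strictly positive, so ξ_B(b,·) is strictly increasing on each connected component of ℝ ∖ Σ_B. -/
open Real Filter Topology Asymptotics

/-- The set of Landau–transverse levels
`Σ_B = {|B|(2m+1) + (πn/d)² : m ∈ ℤ_{≥0}, n ∈ ℤ_{≥1}}` of the free magnetic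
Hamiltonian in a Dirichlet layer of width `d`. -/
def landauLevels (B d : ℝ) : Set ℝ :=
  {x | ∃ m n : ℕ, x = |B| * (2 * (m : ℝ) + 1) + (π * ((n : ℝ) + 1) / d) ^ 2}

/-- The `n`-th term (for `n+1`-st transverse mode) of the series defining the
magnetic regularized Green's function:
`t_n = ln((πn)²/(2|B|d²)) − ψ((|B| − z + (πn/d)²)/(2|B|))`. -/
noncomputable def magTerm (B d z : ℝ) (n : ℕ) : ℝ :=
  Real.log ((π * ((n : ℝ) + 1)) ^ 2 / (2 * |B| * d ^ 2)) -
    digamma ((|B| - z + (π * ((n : ℝ) + 1) / d) ^ 2) / (2 * |B|))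

/-- The magnetic regularized Green's function `ξ_B(b,z)` of a point interaction at
height `b ∈ (0,d)` in the Dirichlet layer of width `d` with homogeneous magnetic
field of strength `B`. -/
noncomputable def xiB (B d b z : ℝ) : ℝ :=
  (1 / (2 * π * d)) * ∑' n : ℕ, magTerm B d z n * Real.sin (π * ((n : ℝ) + 1) * b / d) ^ 2
    + (1 / (4 * π * d)) *
      (Real.eulerMascheroniConstant + digamma (b / d) + (π / 2) * Real.cot (π * b / d))

/-- The trigamma function `ψ' = dψ/dx`. -/
noncomputable def trigamma (x : ℝ) : ℝ := deriv digamma x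


theorem my_analytic {x : ℝ} (hx : ∀ m : ℕ, x ≠ -m) : AnalyticAt ℝ Real.Gamma x := by
  have h1 : AnalyticAt ℂ Complex.Gamma (x : ℂ) := by
    have h2 : AnalyticAt ℂ (fun s : ℂ => (Complex.Gamma s)⁻¹) (x : ℂ) :=
      Complex.differentiable_one_div_Gamma.analyticAt _
    have h3 := h2.inv (inv_ne_zero (Complex.Gamma_ne_zero
      (by intro m h; exact hx m (by exact_mod_cast h))))
    exact h3.congr (Filter.Eventually.of_forall fun y => by simp)
  exact h1.re_ofReal.congr (Filter.Eventually.of_forall fun y => by simp [Complex.Gamma_ofReal])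

theorem digamma_diff {x : ℝ} (hx : ∀ m : ℕ, x ≠ -m) : HasDerivAt digamma (trigamma x) x := by
  have h := my_analytic hx
  exact ((h.deriv.div h (Real.Gamma_ne_zero hx)).differentiableAt).hasDerivAt

theorem digamma_add_one' {x : ℝ} (hx : ∀ m : ℕ, x ≠ -m) : digamma (x + 1) = digamma x + 1 / x := by
  have h0 : x ≠ 0 := by simpa using hx 0
  have h1 := (Real.differentiableAt_Gamma hx).hasDerivAt
  have h2 : HasDerivAt (fun y => Real.Gamma (y + 1)) (1 * Real.Gamma x + x * deriv Real.Gamma x) x := by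
    refine ((hasDerivAt_id x).mul h1).congr_of_eventuallyEq ?_
    filter_upwards [isOpen_ne.mem_nhds h0] with y hy
    simpa using Real.Gamma_add_one hy
  have h3 := h2.deriv
  rw [deriv_comp_add_const] at h3
  have hG := Real.Gamma_ne_zero hx
  unfold digamma
  rw [h3, Real.Gamma_add_one h0]
  field_simp
  ring

theorem nonpole_of_pos {x : ℝ} (hx : 0 < x) (m : ℕ) : x ≠ -m := by
  have : (0:ℝ) ≤ m := Nat.cast_nonneg m
  intro h; linarith

theorem hasDerivAt_logGamma {x : ℝ} (hx : 0 < x) :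
    HasDerivAt (Real.log ∘ Real.Gamma) (digamma x) x :=
  (Real.differentiableAt_Gamma (nonpole_of_pos hx)).hasDerivAt.log (Real.Gamma_pos_of_pos hx).ne'

theorem digamma_mono {x y : ℝ} (hx : 0 < x) (h : x ≤ y) : digamma x ≤ digamma y := by
  have := Real.convexOn_log_Gamma.monotoneOn_deriv (fun x hx => (hasDerivAt_logGamma hx).differentiableAt)
    (Set.mem_Ioi.2 hx) (Set.mem_Ioi.2 (hx.trans_le h)) h
  rwa [(hasDerivAt_logGamma hx).deriv, (hasDerivAt_logGamma (hx.trans_le h)).deriv] at this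

theorem logGamma_add_one {x : ℝ} (hx : 0 < x) :
    (Real.log ∘ Real.Gamma) (x + 1) = (Real.log ∘ Real.Gamma) x + Real.log x := by
  simp only [Function.comp_apply, Real.Gamma_add_one hx.ne',
    Real.log_mul hx.ne' (Real.Gamma_pos_of_pos hx).ne', add_comm]

theorem digamma_le_log {x : ℝ} (hx : 0 < x) : digamma x ≤ Real.log x := by
  have := Real.convexOn_log_Gamma.le_slope_of_hasDerivAt (Set.mem_Ioi.2 hx)
    (Set.mem_Ioi.2 (by linarith : 0 < x + 1)) (by linarith) (hasDerivAt_logGamma hx)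
  rw [slope_def_field, logGamma_add_one hx] at this
  simpa using this

theorem log_le_digamma {x : ℝ} (hx : 0 < x) : Real.log x - 1 / x ≤ digamma x := by
  have := Real.convexOn_log_Gamma.slope_le_of_hasDerivAt (Set.mem_Ioi.2 hx)
    (Set.mem_Ioi.2 (by linarith : 0 < x + 1)) (by linarith) (hasDerivAt_logGamma (by linarith : 0 < x+1))
  rw [slope_def_field, logGamma_add_one hx, digamma_add_one' (nonpole_of_pos hx)] at this
  simp at this
  simp
  linarith

theorem digamma_diff_bound {y h : ℝ} (hy : 1 < y) (hh : 0 < h) :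
    digamma (y + h) - digamma y ≤ h / (y - 1) := by
  have key : ∀ n : ℕ, digamma (y + h) - digamma y ≤ h * (1 / (y - 1) - 1 / (y + n - 1))
      + (digamma (y + h + n) - digamma (y + n)) := by
    intro n
    induction n with
    | zero => simp
    | succ n ih =>
      refine ih.trans ?_
      have hn : (0:ℝ) ≤ n := Nat.cast_nonneg n
      have e1 := digamma_add_one' (nonpole_of_pos (by linarith : 0 < y + h + n))
      have e2 := digamma_add_one' (nonpole_of_pos (by linarith : 0 < y + n))
      push_cast
      rw [← add_assoc, ← add_assoc, e1, e2]
      obtain ⟨u, hu⟩ : ∃ u, u = y + n - 1 := ⟨_, rfl⟩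
      have hu0 : 0 < u := by linarith
      rw [show y + h + n = u + 1 + h by linarith, show y + n + 1 - 1 = u + 1 by linarith,
        show y + n - 1 = u by linarith, show y + (n:ℝ) = u + 1 by linarith]
      have : 1 / (u + 1) - 1 / (u + 1 + h) ≤ h * (1 / u - 1 / (u + 1)) := by
        rw [div_sub_div _ _ (by positivity) (by positivity), div_sub_div _ _ (by positivity) (by positivity), 
          ← mul_div_assoc, div_le_div_iff₀ (by positivity) (by positivity)]
        have : 0 < h * (u+1) := by positivity
        nlinarith [mul_pos this hh]
      linarith
  have lim : Tendsto (fun n : ℕ => h * (1 / (y - 1)) + (h + 1) / ((n : ℝ) + 1)) atTop (𝓝 (h * (1 / (y - 1)) + 0)) := by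
    refine tendsto_const_nhds.add ?_
    have := (tendsto_one_div_add_atTop_nhds_zero_nat (𝕜 := ℝ)).const_mul (h+1)
    simpa [div_eq_mul_inv] using this
  rw [add_zero, mul_one_div] at lim
  refine ge_of_tendsto' lim fun n => (key n).trans ?_
  have hn : (0:ℝ) ≤ n := Nat.cast_nonneg n
  have a1 := digamma_le_log (by linarith : 0 < y + h + n)
  have a2 := log_le_digamma (by linarith : 0 < y + n)
  have a3 : Real.log (y + h + n) - Real.log (y + n) ≤ h / (y + n) := by
    rw [← Real.log_div (by linarith) (by linarith)]
    refine (Real.log_le_sub_one_of_pos (div_pos (by linarith) (by linarith))).trans (le_of_eq ?_)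
    have : y + n ≠ 0 := by linarith
    field_simp; ring
  have a4 : (h + 1) / (y + n) ≤ (h + 1) / (n + 1) := by
    apply div_le_div_of_nonneg_left <;> linarith
  have a5 : 0 ≤ h * (1 / (y + n - 1)) := mul_nonneg hh.le (one_div_nonneg.2 (by linarith))
  rw [mul_one_div] at *
  rw [add_div] at a4
  have : h * (1 / (y - 1) - 1 / (y + n - 1)) = h / (y-1) - h / (y + n - 1) := by ring
  rw [this]
  linarith

theorem trigamma_nonneg {y : ℝ} (hy : 0 < y) : 0 ≤ trigamma y := by
  have h := (hasDerivAt_iff_tendsto_slope.1 (digamma_diff (nonpole_of_pos hy))).mono_left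
    (nhdsWithin_mono y (fun x hx => ne_of_gt hx : Set.Ioi y ⊆ {y}ᶜ))
  refine ge_of_tendsto h ?_
  filter_upwards [self_mem_nhdsWithin] with x hx
  have hx : y < x := hx
  rw [slope_def_field]
  exact div_nonneg (sub_nonneg.2 (digamma_mono hy hx.le)) (by linarith)

theorem trigamma_le {y : ℝ} (hy : 1 < y) : trigamma y ≤ 1 / (y - 1) := by
  have h := (hasDerivAt_iff_tendsto_slope.1 (digamma_diff (nonpole_of_pos (by linarith : 0 < y)))).mono_left
    (nhdsWithin_mono y (fun x hx => ne_of_gt hx : Set.Ioi y ⊆ {y}ᶜ))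
  refine le_of_tendsto h ?_
  filter_upwards [self_mem_nhdsWithin] with x hx
  have hx : y < x := hx
  rw [slope_def_field, div_le_iff₀ (by linarith)]
  have := digamma_diff_bound hy (sub_pos.2 hx)
  rw [add_sub_cancel] at this
  rw [one_div_mul_eq_div]; exact this

theorem trigamma_add_one' {x : ℝ} (hx : ∀ m : ℕ, x ≠ -m) :
    trigamma x = trigamma (x + 1) + 1 / x ^ 2 := by
  have hx1 : ∀ m : ℕ, x + 1 ≠ -m := fun m h => hx (m + 1) (by push_cast; linarith)
  have h0 : x ≠ 0 := by simpa using hx 0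
  have h1 := (digamma_diff hx1).comp_add_const x 1
  have h2 := (digamma_diff hx).add (hasDerivAt_inv h0)
  have ho : ∀ᶠ y : ℝ in 𝓝 x, ∀ m : ℕ, y ≠ -m := by
    filter_upwards [(my_analytic hx).continuousAt.eventually_ne (Real.Gamma_ne_zero hx)] with y hy m h
    exact hy ((Real.Gamma_eq_zero_iff y).2 ⟨m, h⟩)
  have h3 := h1.congr_of_eventuallyEq (f₁ := digamma + fun y => y⁻¹) (by
    filter_upwards [ho] with y hy
    simp [digamma_add_one' hy])
  have := h2.unique h3
  rw [← this]; ring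

theorem trigamma_pos {x : ℝ} (hx : ∀ m : ℕ, x ≠ -m) : 0 < trigamma x := by
  have key : ∀ n : ℕ, ∀ x : ℝ, (∀ m : ℕ, x ≠ -m) → 0 < x + n → 0 < trigamma x := by
    intro n
    induction n with
    | zero =>
      intro x hx h
      have h0 : 0 < x := by simpa using h
      rw [trigamma_add_one' hx]
      have := trigamma_nonneg (by linarith : 0 < x + 1)
      positivity
    | succ n ih =>
      intro x hx h
      have h0 : x ≠ 0 := by simpa using hx 0
      rw [trigamma_add_one' hx]
      have := ih (x + 1) (fun m h => hx (m + 1) (by push_cast; linarith)) (by push_cast at h; linarith)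
      positivity
  obtain ⟨n, hn⟩ := exists_nat_gt (-x)
  exact key n x hx (by linarith)

theorem arg_eq {B d : ℝ} (hB : B ≠ 0) (hd : 0 < d) (w : ℝ) (n : ℕ) :
    (|B| - w + (π * ((n : ℝ) + 1) / d) ^ 2) / (2 * |B|)
      = π ^ 2 / (2 * |B| * d ^ 2) * ((n : ℝ) + 1) ^ 2 + (|B| - w) / (2 * |B|) := by
  have : 0 < |B| := abs_pos.2 hB
  field_simp
  ring

theorem exists_tail {c : ℝ} (hc : 0 < c) (K : ℝ) :
    ∃ N : ℕ, ∀ n : ℕ, N ≤ n → K ≤ c / 2 * ((n : ℝ) + 1) ^ 2 := by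
  obtain ⟨N, hN⟩ := exists_nat_gt (2 * K / c)
  refine ⟨N, fun n hn => ?_⟩
  have h1 : (N : ℝ) ≤ n := by exact_mod_cast hn
  have h0 : (0 : ℝ) ≤ n := Nat.cast_nonneg n
  rw [div_lt_iff₀ hc] at hN
  nlinarith [mul_le_mul_of_nonneg_right h1 hc.le, mul_nonneg hc.le h0, mul_nonneg hc.le (sq_nonneg (n:ℝ))]

theorem summable_sq : Summable fun n : ℕ => 1 / ((n : ℝ) + 1) ^ 2 := by
  have := (summable_nat_add_iff 1).2 (Real.summable_one_div_nat_pow.2 (by norm_num : 1 < 2))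
  simpa using this

theorem log_sub_digamma_bound {x a : ℝ} (hx : 0 < x) (ha : |a| ≤ x / 2) :
    |Real.log x - digamma (x + a)| ≤ (3 * |a| + 2) / x := by
  obtain ⟨ha1, ha2⟩ := abs_le.1 ha
  have hy : 0 < x + a := by linarith
  have b1 := digamma_le_log hy
  have b2 := log_le_digamma hy
  have b3 : Real.log (x + a) - Real.log x ≤ a / x := by
    rw [← Real.log_div hy.ne' hx.ne']
    refine (Real.log_le_sub_one_of_pos (by positivity)).trans (le_of_eq ?_)
    field_simp; ring
  have b4 : Real.log x - Real.log (x + a) ≤ -a / (x + a) := by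
    rw [← Real.log_div hx.ne' hy.ne']
    refine (Real.log_le_sub_one_of_pos (by positivity)).trans (le_of_eq ?_)
    field_simp; ring
  have b5 : a / x ≤ (3 * |a| + 2) / x := by
    have := le_abs_self a
    have := abs_nonneg a
    gcongr; linarith
  have b6 : -a / (x + a) + 1 / (x + a) ≤ (3 * |a| + 2) / x := by
    rw [← add_div, div_le_div_iff₀ hy hx]
    have := neg_abs_le a
    have h0 := abs_nonneg a
    have e1 : (-a + 1) * x ≤ (|a| + 1) * x := by gcongr; linarith
    have e2 : (2 * |a| + 2) * (x / 2) ≤ (3 * |a| + 2) * (x + a) := by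
      apply mul_le_mul <;> linarith
    linarith
  rw [abs_le]; constructor <;> linarith

theorem summable_mag {B d : ℝ} (hB : B ≠ 0) (hd : 0 < d) (b w : ℝ) :
    Summable fun n : ℕ => magTerm B d w n * Real.sin (π * ((n : ℝ) + 1) * b / d) ^ 2 := by
  have hB' : 0 < |B| := abs_pos.2 hB
  have hc : 0 < π ^ 2 / (2 * |B| * d ^ 2) := by positivity
  obtain ⟨N, hN⟩ := exists_tail hc (|(|B| - w) / (2 * |B|)|)
  refine Summable.of_norm_bounded_eventually_nat
    (g := fun n => (3 * |(|B| - w) / (2 * |B|)| + 2) / (π ^ 2 / (2 * |B| * d ^ 2)) * (1 / ((n : ℝ) + 1) ^ 2))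
    (summable_sq.mul_left _) ?_
  filter_upwards [eventually_ge_atTop N] with n hn
  rw [Real.norm_eq_abs, abs_mul]
  have hs : |Real.sin (π * ((n : ℝ) + 1) * b / d) ^ 2| ≤ 1 := by
    rw [abs_of_nonneg (sq_nonneg _)]; exact Real.sin_sq_le_one _
  refine (mul_le_of_le_one_right (abs_nonneg _) hs).trans ?_
  unfold magTerm
  rw [arg_eq hB hd, show (π * ((n : ℝ) + 1)) ^ 2 / (2 * |B| * d ^ 2)
    = π ^ 2 / (2 * |B| * d ^ 2) * ((n : ℝ) + 1) ^ 2 by ring]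
  refine (log_sub_digamma_bound (by positivity) (by have := hN n hn; linarith)).trans (le_of_eq ?_)
  rw [div_mul_div_comm, mul_one]

theorem arg_nonpole {B d z : ℝ} (hB : B ≠ 0) (hz : z ∉ landauLevels B d) (n m : ℕ) :
    (|B| - z + (π * ((n : ℝ) + 1) / d) ^ 2) / (2 * |B|) ≠ -m := by
  have hB' : 0 < |B| := abs_pos.2 hB
  intro h
  rw [div_eq_iff (by positivity)] at h
  exact hz ⟨m, n, by linarith⟩

theorem term_deriv {B d b w : ℝ} (hB : B ≠ 0) (n : ℕ)
    (hw : ∀ m : ℕ, (|B| - w + (π * ((n : ℝ) + 1) / d) ^ 2) / (2 * |B|) ≠ -m) :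
    HasDerivAt (fun w => magTerm B d w n * Real.sin (π * ((n : ℝ) + 1) * b / d) ^ 2)
      (1 / (2 * |B|) * (trigamma ((|B| - w + (π * ((n : ℝ) + 1) / d) ^ 2) / (2 * |B|)) *
              Real.sin (π * ((n : ℝ) + 1) * b / d) ^ 2)) w := by
  have h1 : HasDerivAt (fun w : ℝ => (|B| - w + (π * ((n : ℝ) + 1) / d) ^ 2) / (2 * |B|))
      (-1 / (2 * |B|)) w :=
    (((hasDerivAt_id w).const_sub |B|).add_const _).div_const _
  have h2 := (((digamma_diff hw).comp w h1).const_sub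
    (Real.log ((π * ((n : ℝ) + 1)) ^ 2 / (2 * |B| * d ^ 2)))).mul_const
      (Real.sin (π * ((n : ℝ) + 1) * b / d) ^ 2)
  refine HasDerivAt.congr_deriv h2 ?_
  ring

/-- The tail bounds, uniform for `w` in a unit ball. -/
theorem tail_bound {B d : ℝ} (hB : B ≠ 0) (hd : 0 < d) (b z : ℝ) :
    ∃ N : ℕ, ∃ C : ℝ, ∀ n : ℕ, N ≤ n → ∀ w ∈ Metric.ball z 1,
      1 < (|B| - w + (π * ((n : ℝ) + 1) / d) ^ 2) / (2 * |B|) ∧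
      |trigamma ((|B| - w + (π * ((n : ℝ) + 1) / d) ^ 2) / (2 * |B|)) *
              Real.sin (π * ((n : ℝ) + 1) * b / d) ^ 2| ≤ C * (1 / ((n : ℝ) + 1) ^ 2) := by
  have hB' : 0 < |B| := abs_pos.2 hB
  obtain ⟨c, hc'⟩ : ∃ c, c = π ^ 2 / (2 * |B| * d ^ 2) := ⟨_, rfl⟩
  have hc : 0 < c := by rw [hc']; positivity
  obtain ⟨N, hN⟩ := exists_tail hc (1 - (|B| - (z + 1)) / (2 * |B|))
  refine ⟨N, 2 / c, fun n hn w hw => ?_⟩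
  rw [arg_eq hB hd, ← hc']
  have h1 := hN n hn
  have hw' : w < z + 1 := by
    rw [Metric.mem_ball, Real.dist_eq] at hw
    linarith [(abs_lt.1 hw).2]
  have h2 : (|B| - (z + 1)) / (2 * |B|) < (|B| - w) / (2 * |B|) := by gcongr
  have h3 : 0 < c / 2 * ((n : ℝ) + 1) ^ 2 := by positivity
  have h4 : 1 < c * ((n : ℝ) + 1) ^ 2 + (|B| - w) / (2 * |B|) := by linarith
  refine ⟨h4, ?_⟩
  have hs : |Real.sin (π * ((n : ℝ) + 1) * b / d) ^ 2| ≤ 1 := by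
    rw [abs_of_nonneg (sq_nonneg _)]; exact Real.sin_sq_le_one _
  rw [abs_mul]
  refine (mul_le_of_le_one_right (abs_nonneg _) hs).trans ?_
  rw [abs_of_nonneg (trigamma_nonneg (by linarith))]
  refine (trigamma_le h4).trans ?_
  rw [div_mul_div_comm, mul_one, show (2 : ℝ) / (c * ((n : ℝ) + 1) ^ 2) = 1 / (c / 2 * ((n : ℝ) + 1) ^ 2) by
    field_simp]
  apply one_div_le_one_div_of_le h3
  linarith

theorem summable_tri {B d : ℝ} (hB : B ≠ 0) (hd : 0 < d) (b z : ℝ) :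
    Summable fun n : ℕ => trigamma ((|B| - z + (π * ((n : ℝ) + 1) / d) ^ 2) / (2 * |B|)) *
              Real.sin (π * ((n : ℝ) + 1) * b / d) ^ 2 := by
  obtain ⟨N, C, h⟩ := tail_bound hB hd b z
  refine Summable.of_norm_bounded_eventually_nat (summable_sq.mul_left C) ?_
  filter_upwards [eventually_ge_atTop N] with n hn
  exact (h n hn z (Metric.mem_ball_self one_pos)).2

theorem series_deriv {B d : ℝ} (hB : B ≠ 0) (hd : 0 < d) (b : ℝ) {z : ℝ}
    (hz : z ∉ landauLevels B d) :
    HasDerivAt (fun w => ∑' n : ℕ, magTerm B d w n * Real.sin (π * ((n : ℝ) + 1) * b / d) ^ 2)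
      (∑' n : ℕ, 1 / (2 * |B|) * (trigamma ((|B| - z + (π * ((n : ℝ) + 1) / d) ^ 2) / (2 * |B|)) *
              Real.sin (π * ((n : ℝ) + 1) * b / d) ^ 2)) z := by
  obtain ⟨N, C, h⟩ := tail_bound hB hd b z
  have e : (fun w => ∑' n : ℕ, magTerm B d w n * Real.sin (π * ((n : ℝ) + 1) * b / d) ^ 2)
      = fun w => (∑ n ∈ Finset.range N, magTerm B d w n * Real.sin (π * ((n : ℝ) + 1) * b / d) ^ 2)
        + ∑' n : ℕ, magTerm B d w (n + N) * Real.sin (π * (((n + N : ℕ) : ℝ) + 1) * b / d) ^ 2 := by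
    funext w
    exact ((summable_mag hB hd b w).sum_add_tsum_nat_add N).symm
  rw [e, ← ((summable_tri hB hd b z).mul_left (1 / (2 * |B|))).sum_add_tsum_nat_add N]
  refine (HasDerivAt.fun_sum fun n _ => term_deriv hB n (arg_nonpole hB hz n)).add ?_
  have hu : Summable fun n : ℕ => 1 / (2 * |B|) * (C * (1 / (((n + N : ℕ) : ℝ) + 1) ^ 2)) :=
    (summable_nat_add_iff N).2 ((summable_sq.mul_left C).mul_left (1 / (2 * |B|)))
  refine hasDerivAt_tsum_of_isPreconnected (t := Metric.ball z 1) (y₀ := z)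
    (g := fun n w => magTerm B d w (n + N) * Real.sin (π * (((n + N : ℕ) : ℝ) + 1) * b / d) ^ 2)
    (g' := fun n w => 1 / (2 * |B|) *
      (trigamma ((|B| - w + (π * (((n + N : ℕ) : ℝ) + 1) / d) ^ 2) / (2 * |B|)) *
              Real.sin (π * (((n + N : ℕ) : ℝ) + 1) * b / d) ^ 2))
    hu Metric.isOpen_ball (convex_ball z 1).isPreconnected
    ?_ ?_ (Metric.mem_ball_self one_pos) ?_ (Metric.mem_ball_self one_pos)
  · intro n w hw
    exact term_deriv hB (n + N) (nonpole_of_pos (one_pos.trans (h (n + N) (Nat.le_add_left _ _) w hw).1))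
  · intro n w hw
    rw [Real.norm_eq_abs, abs_mul, abs_of_nonneg (by positivity : 0 ≤ 1 / (2 * |B|))]
    exact mul_le_mul_of_nonneg_left (h (n + N) (Nat.le_add_left _ _) w hw).2 (by positivity)
  · exact (summable_nat_add_iff N).2 (summable_mag hB hd b z)

/-- For `B ≠ 0`, `d > 0`, `b ∈ (0,d)`, the function `z ↦ ξ_B(b,z)` is differentiable
at each `z ∉ Σ_B` with derivative
`(1/(4πd|B|)) Σ_{n≥1} ψ'((|B| − z + (πn/d)²)/(2|B|))·sin²(πnb/d)`, which is strictly
positive; consequently `ξ_B(b,·)` is strictly increasing on each connected component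
of `ℝ ∖ Σ_B`. -/
theorem xiB_hasDerivAt_and_strictMono (B d b : ℝ) (hB : B ≠ 0) (hd : 0 < d)
    (hb0 : 0 < b) (hbd : b < d) :
    (∀ z : ℝ, z ∉ landauLevels B d →
        HasDerivAt (xiB B d b)
          ((1 / (4 * π * d * |B|)) * ∑' n : ℕ,
            trigamma ((|B| - z + (π * ((n : ℝ) + 1) / d) ^ 2) / (2 * |B|)) *
              Real.sin (π * ((n : ℝ) + 1) * b / d) ^ 2) z ∧
        0 < (1 / (4 * π * d * |B|)) * ∑' n : ℕ,
            trigamma ((|B| - z + (π * ((n : ℝ) + 1) / d) ^ 2) / (2 * |B|)) *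
              Real.sin (π * ((n : ℝ) + 1) * b / d) ^ 2) ∧
    (∀ z₁ z₂ : ℝ, z₁ < z₂ → Set.Icc z₁ z₂ ⊆ (landauLevels B d)ᶜ →
        xiB B d b z₁ < xiB B d b z₂) := by
  have hB' : 0 < |B| := abs_pos.2 hB
  have main : ∀ z : ℝ, z ∉ landauLevels B d →
        HasDerivAt (xiB B d b)
          ((1 / (4 * π * d * |B|)) * ∑' n : ℕ,
            trigamma ((|B| - z + (π * ((n : ℝ) + 1) / d) ^ 2) / (2 * |B|)) *
              Real.sin (π * ((n : ℝ) + 1) * b / d) ^ 2) z ∧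
        0 < (1 / (4 * π * d * |B|)) * ∑' n : ℕ,
            trigamma ((|B| - z + (π * ((n : ℝ) + 1) / d) ^ 2) / (2 * |B|)) *
              Real.sin (π * ((n : ℝ) + 1) * b / d) ^ 2 := by
    intro z hz
    constructor
    · have h := ((series_deriv hB hd b hz).const_mul (1 / (2 * π * d))).add_const
        ((1 / (4 * π * d)) *
          (Real.eulerMascheroniConstant + digamma (b / d) + (π / 2) * Real.cot (π * b / d)))
      rw [tsum_mul_left, ← mul_assoc,
        show 1 / (2 * π * d) * (1 / (2 * |B|)) = 1 / (4 * π * d * |B|) by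
          rw [div_mul_div_comm]; ring] at h
      exact h
    · refine mul_pos (by positivity) ((summable_tri hB hd b z).tsum_pos (fun n => ?_) 0 ?_)
      · exact mul_nonneg (trigamma_pos (arg_nonpole hB hz n)).le (sq_nonneg _)
      · refine mul_pos (trigamma_pos (arg_nonpole hB hz 0)) (pow_pos (Real.sin_pos_of_pos_of_lt_pi ?_ ?_) 2)
        · simp only [Nat.cast_zero, zero_add, mul_one]; positivity
        · simp only [Nat.cast_zero, zero_add, mul_one]
          rw [div_lt_iff₀ hd]
          exact mul_lt_mul_of_pos_left hbd Real.pi_pos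
  refine ⟨main, fun z₁ z₂ h12 hI => ?_⟩
  refine strictMonoOn_of_deriv_pos (convex_Icc z₁ z₂)
    (fun x hx => (main x (hI hx)).1.continuousAt.continuousWithinAt) (fun x hx => ?_)
    (Set.left_mem_Icc.2 h12.le) (Set.right_mem_Icc.2 h12.le) h12
  have hx' := main x (hI (interior_subset hx))
  rw [hx'.1.deriv]
  exact hx'.2
end
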